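/- Let G be a finitely generated virtually solvable group (i.e. G has a solvable subgroup of finite index). If G has bVCyc, then G is virtually cyclic. -/

import Mathlib

/-!
The property bVCyc passes to quotients and to subgroups of finite index, so induction on the derived
length reduces the claim to a group `G` with an abelian normal subgroup `A` such that `G ⧸ A` is
virtually cyclic. If `G ⧸ A` is finite, a finite-index subgroup is abelian and has bVCyc; by
B. H. Neumann's covering lemma one of the covering subgroups has finite index. Otherwise a
finite-index subgroup maps onto `ℤ` with abelian kernel `B`. Let `φ` be the automorphism of `B`
induced by conjugation with a preimage `τ` of `1`. It suffices that `B` is finite, for then `⟨τ⟩`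
has finite index. Two consequences of bVCyc are used: powers of `φ` move each element of `B` into
one of finitely many virtually cyclic subgroups (`OrbitCovered`), and counting conjugacy classes in
the cosets `B τ ^ k` bounds the number of coinvariants of `φ ^ k` by `k M` for a constant `M`
(`LinearCoinvariants`).

Up to powers of `φ` there are only finitely many torsion elements. For such an `a`, two of the
elements `a * φ ^ j a` with `j > 0` have a common element in their orbits, and the resulting
relation makes the orbit of `a` finite. Hence the torsion subgroup of `B` and all quotients
`B / B ^ n` are finite, and it remains to show that a torsion-free `B` vanishes. The period of `φ`
on `B / B ^ (p ^ m)` is `O(p ^ m)`, while this quotient has `|B / B ^ p| ^ m` elements, so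
`|B / B ^ p| ≤ p`. Hence when `B ^ p ≠ B` for a prime `p`, the period of `φ` on `B / B ^ p` divides
`p - 1`. For odd `p` these numbers have the common factor `2`, so the period modulo a product of `s`
such primes is smaller than that product by a factor of at least `2 ^ (s - 1)`; this leaves finitely
many `p` with `B ^ p ≠ B`. If `B ^ p = B` and `B` is nontrivial, one of finitely many elements
`c ≠ 1` satisfies `φ ^ k c = c ^ m` with `k ∈ ℤ` and `p ∣ m`. The prime factors of such an `m`
depend only on `c`, so this is possible for only finitely many `p`, a contradiction.
-/

/-- A group is *virtually cyclic* if it has a cyclic subgroup of finite index. -/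
def VirtuallyCyclic (G : Type*) [Group G] : Prop :=
  ∃ H : Subgroup G, IsCyclic H ∧ H.FiniteIndex

/-- A group has *bVCyc* if there are finitely many virtually cyclic subgroups such that
every element lies in a conjugate of one of them. -/
def bVCyc (G : Type*) [Group G] : Prop :=
  ∃ 𝒱 : Finset (Subgroup G), (∀ V ∈ 𝒱, VirtuallyCyclic V) ∧
    ∀ g : G, ∃ V ∈ 𝒱, ∃ x : G, x * g * x⁻¹ ∈ V

/-- A group has *BVC* if there are finitely many virtually cyclic subgroups such that
every virtually cyclic subgroup is contained in a conjugate of one of them. -/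
def BVC (G : Type*) [Group G] : Prop :=
  ∃ 𝒱 : Finset (Subgroup G), (∀ V ∈ 𝒱, VirtuallyCyclic V) ∧
    ∀ W : Subgroup G, VirtuallyCyclic W →
      ∃ V ∈ 𝒱, ∃ x : G, ∀ w ∈ W, x * w * x⁻¹ ∈ V

/-- A group has *bCyc* if there are finitely many elements g₁, …, gₙ such that every
element is conjugate to a power of some gᵢ. -/
def bCyc (G : Type*) [Group G] : Prop :=
  ∃ s : Finset G, ∀ g : G, ∃ a ∈ s, ∃ k : ℤ, IsConj g (a ^ k)

/-- An element is *primitive* if it cannot be written as a proper power. -/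
def Primitive {G : Type*} [Group G] (g : G) : Prop :=
  ∀ (h : G) (n : ℤ), g = h ^ n → n = 1 ∨ n = -1

/-! ### Virtually cyclic groups -/

lemma finiteIndex_comap {G K : Type*} [Group G] [Group K] (f : K →* G) (H : Subgroup G)
    [H.FiniteIndex] : (H.comap f).FiniteIndex := by
  refine ⟨?_⟩
  rw [Subgroup.index_comap]
  exact (inferInstance : (H.subgroupOf f.range).FiniteIndex).index_ne_zero

namespace VirtuallyCyclic

variable {G K : Type*} [Group G] [Group K]

lemma exists_zpowers_finiteIndex (h : VirtuallyCyclic G) :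
    ∃ c : G, (Subgroup.zpowers c).FiniteIndex := by
  obtain ⟨H, hcyc, hfin⟩ := h
  obtain ⟨c, rfl⟩ := H.isCyclic_iff_exists_zpowers_eq_top.1 hcyc
  exact ⟨c, hfin⟩

lemma of_injective (h : VirtuallyCyclic G) (f : K →* G) (hf : Function.Injective f) :
    VirtuallyCyclic K := by
  obtain ⟨H, hcyc, hfin⟩ := h
  refine ⟨H.comap f, ?_, finiteIndex_comap f H⟩
  exact isCyclic_of_injective (f.subgroupComap H) fun x y hxy =>
    Subtype.ext (hf (congrArg Subtype.val hxy))

lemma of_surjective (h : VirtuallyCyclic G) (f : G →* K) (hf : Function.Surjective f) :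
    VirtuallyCyclic K := by
  obtain ⟨H, hcyc, hfin⟩ := h
  refine ⟨H.map f, isCyclic_of_surjective (f.subgroupMap H) (f.subgroupMap_surjective H), ⟨?_⟩⟩
  exact ne_zero_of_dvd_ne_zero hfin.index_ne_zero (H.index_map_dvd hf)

lemma of_finiteIndex (H : Subgroup G) [H.FiniteIndex] (h : VirtuallyCyclic H) :
    VirtuallyCyclic G := by
  obtain ⟨C, hcyc, hfin⟩ := h
  refine ⟨C.map H.subtype,
    isCyclic_of_surjective (H.subtype.subgroupMap C) (H.subtype.subgroupMap_surjective C), ⟨?_⟩⟩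
  rw [Subgroup.index_map_subtype]
  exact mul_ne_zero hfin.index_ne_zero Subgroup.FiniteIndex.index_ne_zero

lemma finite_of_isMulTorsion (h : VirtuallyCyclic G) (hG : IsMulTorsion G) : Finite G := by
  obtain ⟨c, hc⟩ := h.exists_zpowers_finiteIndex
  have hfin : Finite (Subgroup.zpowers c) := finite_zpowers.2 (hG c)
  refine Nat.finite_of_card_ne_zero ?_
  rw [← (Subgroup.zpowers c).card_mul_index]
  exact mul_ne_zero Nat.card_pos.ne' hc.index_ne_zero

lemma finite_setOf_isOfFinOrder {A : Type*} [CommGroup A] (h : VirtuallyCyclic A) :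
    {a : A | IsOfFinOrder a}.Finite :=
  (h.of_injective _ (CommGroup.torsion A).subtype_injective).finite_of_isMulTorsion
    fun a => Submonoid.isOfFinOrder_coe.1 a.2

/-- Raising to the index of a cyclic subgroup is injective and maps into that subgroup. -/
lemma isCyclic {A : Type*} [CommGroup A] [IsMulTorsionFree A] (h : VirtuallyCyclic A) :
    IsCyclic A := by
  obtain ⟨H, hcyc, hfin⟩ := h
  let f : A →* H := (powMonoidHom H.index).codRestrict H fun a => H.pow_index_mem a
  refine isCyclic_of_injective f fun a b hab => ?_
  exact pow_left_injective hfin.index_ne_zero (congrArg Subtype.val hab)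

/-- A cyclic subgroup of finite index contains a power of `w`, hence meets the kernel trivially. -/
lemma finite_ker (h : VirtuallyCyclic G) (f : G →* K) {w : G} (hw : ¬ IsOfFinOrder (f w)) :
    Finite f.ker := by
  obtain ⟨c, hc⟩ := h.exists_zpowers_finiteIndex
  obtain ⟨n, hn, -, k, hk⟩ :=
    (Subgroup.zpowers c).exists_pow_mem_of_index_ne_zero hc.index_ne_zero w
  have hfc : ¬ IsOfFinOrder (f c) := fun hfin => by
    refine hw (IsOfFinOrder.of_pow (n := n) ?_ hn.ne')
    rw [← map_pow, ← hk, map_zpow]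
    exact hfin.zpow
  have hbot : (Subgroup.zpowers c).subgroupOf f.ker = ⊥ := by
    rw [Subgroup.subgroupOf_eq_bot, Subgroup.disjoint_def]
    rintro _ ⟨m, rfl⟩ hm
    rw [MonoidHom.mem_ker, map_zpow] at hm
    have hm0 : m = 0 := by
      by_contra hm0
      exact hfc (isOfFinOrder_iff_zpow_eq_one.2 ⟨m, hm0, hm⟩)
    simp [hm0]
  refine Nat.finite_of_card_ne_zero ?_
  rw [← Subgroup.index_bot, ← hbot]
  exact Subgroup.FiniteIndex.index_ne_zero

end VirtuallyCyclic

namespace bVCyc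

variable {G : Type*} [Group G]

lemma of_surjective {Q : Type*} [Group Q] (h : bVCyc G) (f : G →* Q)
    (hf : Function.Surjective f) : bVCyc Q := by
  classical
  obtain ⟨𝒱, hV, hc⟩ := h
  refine ⟨𝒱.image (Subgroup.map f), ?_, ?_⟩
  · intro V' hV'
    obtain ⟨V, hVm, rfl⟩ := Finset.mem_image.1 hV'
    exact (hV V hVm).of_surjective (f.subgroupMap V) (f.subgroupMap_surjective V)
  · intro q
    obtain ⟨g, rfl⟩ := hf q
    obtain ⟨V, hVm, x, hx⟩ := hc g
    exact ⟨_, Finset.mem_image_of_mem _ hVm, f x, ⟨_, hx, by simp⟩⟩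

/-- A conjugacy class of `G` splits over `K` according to coset representatives `r` of `K`, so the
subgroups to use are the `r⁻¹ V r ∩ K`. -/
lemma of_finiteIndex (h : bVCyc G) (K : Subgroup G) [K.FiniteIndex] : bVCyc K := by
  classical
  obtain ⟨𝒱, hV, hc⟩ := h
  have := Fintype.ofFinite (G ⧸ K)
  let f : G → K →* G := fun r => (MulAut.conj r).toMonoidHom.comp K.subtype
  have hf : ∀ r, Function.Injective (f r) := fun r =>
    (MulAut.conj r).injective.comp K.subtype_injective
  refine ⟨(𝒱 ×ˢ (Finset.univ : Finset (G ⧸ K))).image fun v => v.1.comap (f v.2.out), ?_, ?_⟩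
  · intro V' hV'
    obtain ⟨⟨V, q⟩, hVm, rfl⟩ := Finset.mem_image.1 hV'
    refine (hV V (Finset.mem_product.1 hVm).1).of_injective ((f q.out).subgroupComap V) ?_
    exact fun x y hxy => Subtype.ext (hf _ (congrArg Subtype.val hxy))
  · intro g
    obtain ⟨V, hVm, x, hx⟩ := hc g
    have hmem : (Quotient.out (x : G ⧸ K))⁻¹ * x ∈ K :=
      QuotientGroup.eq.1 (QuotientGroup.out_eq' _)
    set r : G := Quotient.out (x : G ⧸ K)
    refine ⟨V.comap (f r), Finset.mem_image.2 ⟨(V, (x : G ⧸ K)),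
      Finset.mem_product.2 ⟨hVm, Finset.mem_univ _⟩, rfl⟩, ⟨_, hmem⟩, ?_⟩
    change r * (r⁻¹ * x * g * (r⁻¹ * x)⁻¹) * r⁻¹ ∈ V
    convert hx using 1
    group

/-- By B. H. Neumann's covering lemma, one of finitely many subgroups covering an abelian group
has finite index. -/
lemma virtuallyCyclic_of_isMulCommutative [IsMulCommutative G] (h : bVCyc G) :
    VirtuallyCyclic G := by
  obtain ⟨𝒱, hV, hc⟩ := h
  obtain ⟨V, hVm, hfin⟩ := Subgroup.exists_finiteIndex_of_leftCoset_cover (G := G) (s := 𝒱)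
    (H := fun V => V) (g := fun _ => 1) (by
      refine Set.eq_univ_of_forall fun g => ?_
      obtain ⟨V, hVm, x, hx⟩ := hc g
      rw [mul_comm' x g, mul_inv_cancel_right] at hx
      exact Set.mem_biUnion hVm (by simpa using hx))
  exact VirtuallyCyclic.of_finiteIndex V (hV V hVm)

end bVCyc

/-! ### Automorphisms of abelian groups -/

section Automorphisms

variable {B : Type*} [CommGroup B] {φ : MulAut B}

/-- The group of automorphisms of `B` that preserve every coset of `S`. For a `φ`-invariant `S`,
membership of `φ` says that `φ` induces the identity on `B ⧸ S`. -/
def trivialMod (S : Subgroup B) : Subgroup (MulAut B) where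
  carrier := {φ | ∀ b, φ b / b ∈ S}
  mul_mem' {φ ψ} hφ hψ b := by
    simpa only [MulAut.mul_apply, div_mul_div_cancel] using S.mul_mem (hφ (ψ b)) (hψ b)
  one_mem' b := by simp
  inv_mem' {φ} hφ b := by
    simpa only [MulAut.apply_inv_self, inv_div] using S.inv_mem (hφ (φ⁻¹ b))

lemma mem_trivialMod {S : Subgroup B} : φ ∈ trivialMod S ↔ ∀ b, φ b / b ∈ S := Iff.rfl

/-- The automorphism induced on the quotient by a characteristic subgroup. -/
def quotientAut (K : Subgroup B) [hK : K.Characteristic] : MulAut B →* MulAut (B ⧸ K) where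
  toFun φ := QuotientGroup.congr K K φ (Subgroup.characteristic_iff_map_eq.1 hK φ)
  map_one' := MulEquiv.ext fun q => q.induction_on fun _ => rfl
  map_mul' _ _ := MulEquiv.ext fun q => q.induction_on fun _ => rfl

instance characteristic_torsion : (CommGroup.torsion B).Characteristic :=
  Subgroup.characteristic_iff_map_eq.2 fun φ => φ.map_torsion

lemma quotientAut_mk (K : Subgroup B) [K.Characteristic] (φ : MulAut B) (b : B) :
    quotientAut K φ (b : B ⧸ K) = (φ b : B) := rfl

lemma ker_quotientAut (K : Subgroup B) [K.Characteristic] :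
    (quotientAut K).ker = trivialMod K := by
  ext φ
  rw [MonoidHom.mem_ker, mem_trivialMod, MulEquiv.ext_iff, QuotientGroup.mk_surjective.forall]
  refine forall_congr' fun b => ?_
  rw [quotientAut_mk, MulAut.one_apply, QuotientGroup.eq_iff_div_mem]

/-- The powers of `φ` move every element of `B` into one of finitely many virtually cyclic
subgroups. This is what bVCyc says about a normal abelian subgroup on which the ambient group acts
through the powers of `φ`. -/
def OrbitCovered (φ : MulAut B) : Prop :=
  ∃ 𝒱 : Finset (Subgroup B), (∀ V ∈ 𝒱, VirtuallyCyclic V) ∧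
    ∀ b, ∃ V ∈ 𝒱, ∃ n : ℤ, (φ ^ n) b ∈ V

/-- The order of the group of coinvariants of `φ ^ k` is at most `k * M`. Instead of the
coinvariants, all quotients `B ⧸ S` on which `φ ^ k` acts trivially are used; an infinite quotient,
which has `S.index = 0`, is excluded. -/
def LinearCoinvariants (φ : MulAut B) (M : ℕ) : Prop :=
  ∀ k : ℕ, 0 < k → ∀ S : Subgroup B, φ ^ k ∈ trivialMod S → S.index ≠ 0 ∧ S.index ≤ k * M

lemma OrbitCovered.quotient (h : OrbitCovered φ) (K : Subgroup B) [K.Characteristic] :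
    OrbitCovered (quotientAut K φ) := by
  classical
  obtain ⟨𝒱, hV, hc⟩ := h
  let p := QuotientGroup.mk' K
  refine ⟨𝒱.image (Subgroup.map p), ?_, ?_⟩
  · intro V' hV'
    obtain ⟨V, hVm, rfl⟩ := Finset.mem_image.1 hV'
    exact (hV V hVm).of_surjective (p.subgroupMap V) (p.subgroupMap_surjective V)
  · intro q
    induction q using QuotientGroup.induction_on with
    | H b =>
      obtain ⟨V, hVm, n, hn⟩ := hc b
      refine ⟨_, Finset.mem_image_of_mem _ hVm, n, ?_⟩
      rw [← map_zpow, quotientAut_mk]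
      exact Subgroup.mem_map_of_mem p hn

lemma LinearCoinvariants.quotient {M : ℕ} (h : LinearCoinvariants φ M) (K : Subgroup B)
    [K.Characteristic] : LinearCoinvariants (quotientAut K φ) M := by
  intro k hk S hS
  rw [← S.index_comap_of_surjective (QuotientGroup.mk'_surjective K)]
  refine h k hk _ fun b => ?_
  have := hS b
  rwa [← map_pow, quotientAut_mk] at this

/-! ### Torsion -/

lemma finite_range_zpow_apply {b : B} {k : ℤ} (hk : k ≠ 0) (h : (φ ^ k) b = b) :
    (Set.range fun n : ℤ => (φ ^ n) b).Finite := by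
  refine ((Set.finite_Ico 0 |k|).image fun n : ℤ => (φ ^ n) b).subset ?_
  rintro _ ⟨n, rfl⟩
  refine ⟨n % k, ⟨Int.emod_nonneg n hk, Int.emod_lt_abs n hk⟩, ?_⟩
  have hfix : φ ^ k ∈ MulAction.stabilizer (MulAut B) b := h
  have hmul : (φ ^ (k * (n / k))) b = b := by
    rw [zpow_mul]
    exact Subgroup.zpow_mem _ hfix _
  change (φ ^ (n % k)) b = (φ ^ n) b
  conv_rhs => rw [← Int.emod_add_mul_ediv n k, zpow_add, MulAut.mul_apply, hmul]

/-- The orbit of `a` stays, from `u` on, in a finitely generated torsion group. -/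
lemma exists_zpow_apply_eq_self_of_mem_closure {a : B} (ha : IsOfFinOrder a) {u v : ℤ}
    (huv : u < v) (h : (φ ^ v) a ∈ Subgroup.closure ((fun n => (φ ^ n) a) '' Set.Ico u v)) :
    ∃ k : ℤ, k ≠ 0 ∧ (φ ^ k) a = a := by
  set T := (fun n => (φ ^ n) a) '' Set.Ico u v
  have hφ : Subgroup.closure T ≤ (Subgroup.closure T).comap φ.toMonoidHom := by
    rw [Subgroup.closure_le]
    rintro _ ⟨n, ⟨hun, hnv⟩, rfl⟩
    have hsucc : φ ((φ ^ n) a) = (φ ^ (n + 1)) a := by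
      rw [add_comm, zpow_add, zpow_one, MulAut.mul_apply]
    change φ ((φ ^ n) a) ∈ Subgroup.closure T
    rw [hsucc]
    rcases (Int.add_one_le_iff.2 hnv).eq_or_lt with rfl | hlt
    · exact h
    · exact Subgroup.subset_closure ⟨n + 1, ⟨by omega, hlt⟩, rfl⟩
  have hmem (n : ℕ) : (φ ^ (u + n)) a ∈ Subgroup.closure T := by
    induction n with
    | zero => exact Subgroup.subset_closure ⟨u, ⟨le_rfl, huv⟩, by simp⟩
    | succ n ih =>
      rw [Nat.cast_succ, ← add_assoc, add_comm _ (1 : ℤ), zpow_add, zpow_one, MulAut.mul_apply]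
      exact hφ ih
  have : Finite T := ((Set.finite_Ico u v).image _).to_subtype
  have htor : Subgroup.closure T ≤ CommGroup.torsion B := by
    rw [Subgroup.closure_le]
    rintro _ ⟨n, -, rfl⟩
    exact (φ ^ n).toMonoidHom.isOfFinOrder ha
  have hfin : Finite (Subgroup.closure T) :=
    CommGroup.finite_of_fg_isMulTorsion _ fun x => Submonoid.isOfFinOrder_coe.1 (htor x.2)
  obtain ⟨m, n, hmn, heq⟩ := Finite.exists_ne_map_eq_of_infinite fun n : ℕ =>
    (⟨_, hmem n⟩ : Subgroup.closure T)
  refine ⟨n - m, sub_ne_zero.2 (by exact_mod_cast hmn.symm), (φ ^ (u + m)).injective ?_⟩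
  rw [← MulAut.mul_apply, ← zpow_add, show u + m + (n - m) = u + n by ring]
  exact (congrArg Subtype.val heq).symm

/-- The exponent `d + j` is larger than the other three, so that the relation expresses the last
term through earlier elements of the orbit. -/
lemma exists_zpow_apply_eq_self_of_mul_eq {a : B} (ha : IsOfFinOrder a) {i j d : ℤ} (hi : 0 < i)
    (hj : 0 < j) (hd : i < d + j)
    (h : a * (φ ^ i) a = (φ ^ d) a * (φ ^ (d + j)) a) : ∃ k : ℤ, k ≠ 0 ∧ (φ ^ k) a = a := by
  refine exists_zpow_apply_eq_self_of_mem_closure ha (u := min 0 d) (v := d + j) (by omega) ?_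
  rw [← inv_mul_eq_iff_eq_mul.2 h]
  have hmem (n : ℤ) (hn : n ∈ Set.Ico (min 0 d) (d + j)) :
      (φ ^ n) a ∈ Subgroup.closure ((fun n => (φ ^ n) a) '' Set.Ico (min 0 d) (d + j)) :=
    Subgroup.subset_closure ⟨n, hn, rfl⟩
  refine mul_mem (inv_mem (hmem d ⟨by omega, by omega⟩))
    (mul_mem ?_ (hmem i ⟨by omega, by omega⟩))
  simpa using hmem 0 ⟨by omega, by omega⟩

/-- Two of the elements `a * φ ^ (j + 1) a` have a common element in their orbits. In the resulting
relation either the largest or the smallest exponent occurs only once; the latter case reduces to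
the former by passing to `φ⁻¹`. -/
lemma finite_range_zpow_apply_of_recurrent {a : B} (ha : IsOfFinOrder a) {F : Set B}
    (hF : F.Finite) (h : ∀ j : ℕ, ∃ n : ℤ, (φ ^ n) (a * (φ ^ (j + 1)) a) ∈ F) :
    (Set.range fun n : ℤ => (φ ^ n) a).Finite := by
  choose n hn using h
  have := hF.to_subtype
  obtain ⟨i, j, hij, heq⟩ := Finite.exists_ne_map_eq_of_infinite fun j : ℕ => (⟨_, hn j⟩ : F)
  wlog hlt : i < j generalizing i j
  · exact this j i hij.symm heq.symm (by omega)
  suffices ∃ k : ℤ, k ≠ 0 ∧ (φ ^ k) a = a from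
    let ⟨_, hk, hka⟩ := this; finite_range_zpow_apply hk hka
  set d := n j - n i
  have hrel : a * (φ ^ (i + 1 : ℤ)) a = (φ ^ d) a * (φ ^ (d + (j + 1 : ℤ))) a := by
    have heq' : (φ ^ n i) (a * (φ ^ (i + 1)) a) = (φ ^ n j) (a * (φ ^ (j + 1)) a) :=
      congrArg Subtype.val heq
    refine (φ ^ n i).injective ?_
    rw [zpow_add _ d, MulAut.mul_apply, ← map_mul (φ ^ d), ← MulAut.mul_apply, ← zpow_add,
      add_sub_cancel]
    exact_mod_cast heq'
  by_cases hd : (i + 1 : ℤ) < d + (j + 1)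
  · exact exists_zpow_apply_eq_self_of_mul_eq ha (by omega) (by omega) hd hrel
  · have hrel_inv : a * (φ⁻¹ ^ (i + 1 : ℤ)) a =
        (φ⁻¹ ^ (i - d - j : ℤ)) a * (φ⁻¹ ^ (i - d - j + (j + 1 : ℤ))) a := by
      have hmap := congrArg (φ ^ (-(i + 1 : ℤ))) hrel
      simp only [map_mul, ← MulAut.mul_apply, ← zpow_add, neg_add_cancel, zpow_zero,
        MulAut.one_apply] at hmap
      rw [inv_zpow', inv_zpow', inv_zpow', mul_comm a, hmap, mul_comm]
      ring_nf
    obtain ⟨k, hk, hka⟩ := exists_zpow_apply_eq_self_of_mul_eq ha (by omega) (by omega)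
      (by omega) hrel_inv
    exact ⟨-k, neg_ne_zero.2 hk, by rwa [← inv_zpow']⟩

theorem OrbitCovered.finite_setOf_isOfFinOrder (h : OrbitCovered φ) :
    {b : B | IsOfFinOrder b}.Finite := by
  obtain ⟨𝒱, hV, hc⟩ := h
  set F : Set B := ⋃ V ∈ 𝒱, Subtype.val '' {x : V | IsOfFinOrder x}
  have hF : F.Finite := 𝒱.finite_toSet.biUnion fun V hVm =>
    (hV V hVm).finite_setOf_isOfFinOrder.image _
  have hcF (b : B) (hb : IsOfFinOrder b) : ∃ n : ℤ, (φ ^ n) b ∈ F := by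
    obtain ⟨V, hVm, n, hn⟩ := hc b
    refine ⟨n, Set.mem_biUnion hVm ⟨⟨_, hn⟩, ?_, rfl⟩⟩
    exact Submonoid.isOfFinOrder_coe.1 ((φ ^ n).toMonoidHom.isOfFinOrder hb)
  have hFtor (f : B) (hf : f ∈ F) : IsOfFinOrder f := by
    obtain ⟨V, -, x, hx, rfl⟩ := Set.mem_iUnion₂.1 hf
    exact Submonoid.isOfFinOrder_coe.2 hx
  refine (hF.biUnion (t := fun f => Set.range fun n : ℤ => (φ ^ n) f) fun f hf =>
    finite_range_zpow_apply_of_recurrent (hFtor f hf) hF fun j =>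
      hcF _ ((hFtor f hf).mul ((φ ^ (j + 1)).toMonoidHom.isOfFinOrder (hFtor f hf)))).subset ?_
  intro b hb
  obtain ⟨n, hn⟩ := hcF b hb
  exact Set.mem_biUnion hn ⟨-n, by simp [← MulAut.mul_apply]⟩

lemma OrbitCovered.finite_of_isMulTorsion (h : OrbitCovered φ) (hB : IsMulTorsion B) :
    Finite B :=
  Set.finite_univ_iff.1 (h.finite_setOf_isOfFinOrder.subset fun b _ => hB b)

end Automorphisms

/-! ### Quotients by powers -/

section Powers

variable {B : Type*} [CommGroup B] {φ : MulAut B}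

/-- The subgroup of `n`-th powers. -/
abbrev powSubgroup (B : Type*) [CommGroup B] (n : ℕ) : Subgroup B :=
  (powMonoidHom n : B →* B).range

instance characteristic_powSubgroup (n : ℕ) : (powSubgroup B n).Characteristic := by
  refine Subgroup.characteristic_iff_le_comap.2 fun φ => ?_
  rintro _ ⟨x, rfl⟩
  exact ⟨φ x, (map_pow φ x n).symm⟩

lemma powSubgroup_le_of_dvd {m n : ℕ} (h : m ∣ n) : powSubgroup B n ≤ powSubgroup B m := by
  obtain ⟨d, rfl⟩ := h
  rintro _ ⟨x, rfl⟩
  exact ⟨x ^ d, (pow_mul' x m d).symm⟩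

lemma mem_powSubgroup_mul_of_coprime {m n : ℕ} (h : m.Coprime n) {b : B}
    (hm : b ∈ powSubgroup B m) (hn : b ∈ powSubgroup B n) : b ∈ powSubgroup B (m * n) := by
  obtain ⟨x, hx⟩ := hm
  obtain ⟨y, hy⟩ := hn
  replace hx : x ^ (m : ℤ) = b := by exact_mod_cast hx
  replace hy : y ^ (n : ℤ) = b := by exact_mod_cast hy
  obtain ⟨u, v, huv⟩ := Nat.isCoprime_iff_coprime.2 h
  refine ⟨y ^ u * x ^ v, ?_⟩
  calc (y ^ u * x ^ v) ^ (m * n)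
      = (y ^ (n : ℤ)) ^ (u * m) * (x ^ (m : ℤ)) ^ (v * n) := by
        rw [← zpow_natCast, mul_zpow]
        simp only [← zpow_mul]
        push_cast
        ring_nf
    _ = b := by rw [hx, hy, ← zpow_add, huv, zpow_one]

lemma mem_powSubgroup_prod {ι : Type*} {s : Finset ι} {f : ι → ℕ}
    (hf : (s : Set ι).Pairwise (Function.onFun Nat.Coprime f)) {b : B}
    (h : ∀ i ∈ s, b ∈ powSubgroup B (f i)) : b ∈ powSubgroup B (∏ i ∈ s, f i) := by
  classical
  induction s using Finset.induction_on with
  | empty => exact ⟨b, by simp⟩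
  | insert i s his ih =>
    rw [Finset.coe_insert, Set.pairwise_insert] at hf
    rw [Finset.forall_mem_insert] at h
    rw [Finset.prod_insert his]
    refine mem_powSubgroup_mul_of_coprime (Nat.Coprime.prod_right fun j hj => ?_) h.1 (ih hf.1 h.2)
    exact (hf.2 j hj fun hij => his (hij ▸ hj)).1

/-- The product `s` of the `ψ ^ i b` for `i < p` is a `p`-th power `x ^ p`, and
`ψ ^ p b / b = ψ s / s = (ψ x / x) ^ p`. -/
lemma pow_mem_trivialMod_powSubgroup_mul {ψ : MulAut B} {p q : ℕ} (hpq : p ∣ q)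
    (h : ψ ∈ trivialMod (powSubgroup B q)) : ψ ^ p ∈ trivialMod (powSubgroup B (q * p)) := by
  intro b
  set s := ∏ i ∈ Finset.range p, (ψ ^ i) b
  have htelescope : ψ s / s = (ψ ^ p) b / b := by
    have hsucc (i : ℕ) : ψ ((ψ ^ i) b) = (ψ ^ (i + 1)) b := by rw [pow_succ', MulAut.mul_apply]
    simp only [s, map_prod, hsucc, ← Finset.prod_div_distrib]
    simpa using Finset.prod_range_div (fun i => (ψ ^ i) b) p
  have hs : s ∈ powSubgroup B p := by
    have hdiv : s / b ^ p ∈ powSubgroup B q := by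
      have : s / b ^ p = ∏ i ∈ Finset.range p, (ψ ^ i) b / b := by simp [s]
      rw [this]
      exact Subgroup.prod_mem _ fun i _ => pow_mem h i b
    simpa using mul_mem (powSubgroup_le_of_dvd hpq hdiv) (⟨b, rfl⟩ : b ^ p ∈ powSubgroup B p)
  obtain ⟨x, hx⟩ := hs
  obtain ⟨y, hy⟩ := h x
  refine ⟨y, ?_⟩
  calc y ^ (q * p) = (ψ x / x) ^ p := by rw [← hy, powMonoidHom_apply, pow_mul]
    _ = (ψ ^ p) b / b := by rw [← htelescope, ← hx, div_pow, powMonoidHom_apply, map_pow]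

lemma pow_mem_trivialMod_powSubgroup_pow {ψ : MulAut B} {p : ℕ}
    (h : ψ ∈ trivialMod (powSubgroup B p)) (m : ℕ) :
    ψ ^ p ^ m ∈ trivialMod (powSubgroup B (p ^ (m + 1))) := by
  induction m with
  | zero => simpa using h
  | succ m ih =>
    rw [pow_succ p m, pow_mul, pow_succ p (m + 1)]
    exact pow_mem_trivialMod_powSubgroup_mul (dvd_pow_self p m.succ_ne_zero) ih

lemma pow_card_mulAut_quotient_mem_trivialMod (φ : MulAut B) (K : Subgroup B)
    [K.Characteristic] : φ ^ Nat.card (MulAut (B ⧸ K)) ∈ trivialMod K := by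
  rw [← ker_quotientAut, MonoidHom.mem_ker, map_pow, pow_card_eq_one']

/-- A cyclic group of order `p` has `p - 1` automorphisms. -/
lemma pow_sub_one_mem_trivialMod (φ : MulAut B) {K : Subgroup B} [K.Characteristic] {p : ℕ}
    (hp : p.Prime) (hK : K.index = p) : φ ^ (p - 1) ∈ trivialMod K := by
  have := Fact.mk hp
  have : Finite (B ⧸ K) := Subgroup.index_ne_zero_iff_finite.1 (hK ▸ hp.ne_zero)
  have : IsCyclic (B ⧸ K) := isCyclic_of_prime_card (hK ▸ K.index_eq_card.symm)
  have hcard : Nat.card (MulAut (B ⧸ K)) = p - 1 := by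
    rw [IsCyclic.card_mulAut, ← K.index_eq_card, hK, Nat.totient_prime hp]
  rw [← hcard]
  exact pow_card_mulAut_quotient_mem_trivialMod φ K

lemma prime_dvd_index_powSubgroup {p : ℕ} (hp : p.Prime) (h : powSubgroup B p ≠ ⊤) :
    p ∣ (powSubgroup B p).index := by
  have := Fact.mk hp
  obtain ⟨b, hb⟩ := not_forall.1 (mt (Subgroup.eq_top_iff' _).2 h)
  have hord : orderOf (b : B ⧸ powSubgroup B p) = p := by
    refine orderOf_eq_prime ?_ fun hone => hb ((QuotientGroup.eq_one_iff _).1 hone)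
    exact (QuotientGroup.eq_one_iff (b ^ p)).2 ⟨b, rfl⟩
  rw [Subgroup.index_eq_card]
  exact hord.symm.dvd.trans (orderOf_dvd_natCard _)

lemma OrbitCovered.finite_quotient_powSubgroup (h : OrbitCovered φ) {n : ℕ} (hn : n ≠ 0) :
    Finite (B ⧸ powSubgroup B n) :=
  (h.quotient _).finite_of_isMulTorsion (CommGroup.isMulTorsion_quotient_range_powMonoidHom B hn)

lemma exists_mul_pow_lt_pow_succ {n : ℕ} (hn : n ≠ 0) (C : ℕ) :
    ∃ m, C * n ^ m < (n + 1) ^ (m + 1) := by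
  have hn' : (0 : ℝ) < n := by exact_mod_cast hn.bot_lt
  obtain ⟨m, hm⟩ := pow_unbounded_of_one_lt (C : ℝ) ((one_lt_div hn').2 (lt_add_one (n : ℝ)))
  rw [div_pow, lt_div_iff₀ (by positivity)] at hm
  refine ⟨m, lt_of_lt_of_le (by exact_mod_cast hm) (Nat.pow_le_pow_right n.succ_pos m.le_succ)⟩

/-- The witness is twice the product of the `(n - 1) / 2`. -/
lemma exists_sub_one_dvd_mul_two_pow_card_le {s : Finset ℕ} (hs : ∀ n ∈ s, Odd n ∧ n ≠ 1) :
    ∃ k, 0 < k ∧ (∀ n ∈ s, n - 1 ∣ k) ∧ k * 2 ^ s.card ≤ 2 * ∏ n ∈ s, n := by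
  have hhalf : ∀ n ∈ s, 0 < (n - 1) / 2 ∧ 2 * ((n - 1) / 2) = n - 1 := by
    intro n hn
    obtain ⟨⟨r, rfl⟩, hne⟩ := hs n hn
    omega
  refine ⟨2 * ∏ n ∈ s, (n - 1) / 2, ?_, fun n hn => ?_, ?_⟩
  · exact Nat.mul_pos two_pos (Finset.prod_pos fun n hn => (hhalf n hn).1)
  · rw [← (hhalf n hn).2]
    exact Nat.mul_dvd_mul_left 2 (Finset.dvd_prod_of_mem _ hn)
  · rw [mul_assoc, ← Finset.prod_const, ← Finset.prod_mul_distrib]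
    refine Nat.mul_le_mul_left 2 (Finset.prod_le_prod' fun n hn => ?_)
    have := (hhalf n hn).2
    omega

section TorsionFree

variable [IsMulTorsionFree B]

lemma index_powSubgroup_mul {m n : ℕ} (hm : m ≠ 0) :
    (powSubgroup B (m * n)).index = (powSubgroup B m).index * (powSubgroup B n).index := by
  have hcomp : (powMonoidHom (m * n) : B →* B) = (powMonoidHom m).comp (powMonoidHom n) :=
    MonoidHom.ext fun b => pow_mul' b m n
  rw [powSubgroup, hcomp, MonoidHom.range_comp,
    Subgroup.index_map_of_injective _ (pow_left_injective hm), mul_comm]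

lemma index_powSubgroup_prod {ι : Type*} {s : Finset ι} {f : ι → ℕ} (hf : ∀ i ∈ s, f i ≠ 0) :
    (powSubgroup B (∏ i ∈ s, f i)).index = ∏ i ∈ s, (powSubgroup B (f i)).index := by
  classical
  induction s using Finset.induction_on with
  | empty =>
    have hone : powSubgroup B 1 = ⊤ := (Subgroup.eq_top_iff' _).2 fun b => ⟨b, pow_one b⟩
    rw [Finset.prod_empty, Finset.prod_empty, hone, Subgroup.index_top]
  | insert i s his ih =>
    rw [Finset.forall_mem_insert] at hf
    rw [Finset.prod_insert his, Finset.prod_insert his, index_powSubgroup_mul hf.1, ih hf.2]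

lemma index_powSubgroup_pow {n : ℕ} (hn : n ≠ 0) (m : ℕ) :
    (powSubgroup B (n ^ m)).index = (powSubgroup B n).index ^ m := by
  simpa using index_powSubgroup_prod (B := B) (s := Finset.range m) fun _ _ => hn

/-- The period of `φ` modulo `p ^ m`-th powers grows at most like `p ^ m`, whereas the quotient by
these powers has `|B / B ^ p| ^ m` elements. -/
lemma index_powSubgroup_le (h : OrbitCovered φ) {M : ℕ} (hM : LinearCoinvariants φ M) {p : ℕ}
    (hp : p ≠ 0) : (powSubgroup B p).index ≤ p := by
  by_contra! hlt
  have := h.finite_quotient_powSubgroup hp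
  set k := Nat.card (MulAut (B ⧸ powSubgroup B p))
  have hk : 0 < k := Nat.card_pos
  obtain ⟨m, hm⟩ := exists_mul_pow_lt_pow_succ hp (k * M)
  refine hm.not_ge ?_
  calc (p + 1) ^ (m + 1) ≤ (powSubgroup B p).index ^ (m + 1) := Nat.pow_le_pow_left hlt _
    _ = (powSubgroup B (p ^ (m + 1))).index := (index_powSubgroup_pow hp _).symm
    _ ≤ k * p ^ m * M := by
      refine (hM _ (by positivity) _ ?_).2
      rw [pow_mul]
      exact pow_mem_trivialMod_powSubgroup_pow (pow_card_mulAut_quotient_mem_trivialMod φ _) m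
    _ = k * M * p ^ m := by ring

lemma index_powSubgroup_prime (h : OrbitCovered φ) {M : ℕ} (hM : LinearCoinvariants φ M) {p : ℕ}
    (hp : p.Prime) (hne : powSubgroup B p ≠ ⊤) : (powSubgroup B p).index = p := by
  have := h.finite_quotient_powSubgroup hp.ne_zero
  refine (index_powSubgroup_le h hM hp.ne_zero).antisymm ?_
  exact Nat.le_of_dvd Nat.card_pos (prime_dvd_index_powSubgroup hp hne)

/-- Distinct odd primes `p` have numbers `p - 1` sharing the factor `2`, so the period of `φ`
modulo the product of `s` is smaller than that product by a factor of `2 ^ (|s| - 1)`. -/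
lemma two_pow_card_le_of_powSubgroup_ne_top (h : OrbitCovered φ) {M : ℕ}
    (hM : LinearCoinvariants φ M) {s : Finset ℕ}
    (hs : ∀ p ∈ s, (p.Prime ∧ powSubgroup B p ≠ ⊤) ∧ p ≠ 2) : 2 ^ s.card ≤ 2 * M := by
  have hprime : ∀ p ∈ s, p.Prime := fun p hp => (hs p hp).1.1
  have hindex : ∀ p ∈ s, (powSubgroup B p).index = p := fun p hp =>
    index_powSubgroup_prime h hM (hprime p hp) (hs p hp).1.2
  obtain ⟨k, hk, hdvd, hle⟩ := exists_sub_one_dvd_mul_two_pow_card_le fun p hp =>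
    ⟨(hprime p hp).odd_of_ne_two (hs p hp).2, (hprime p hp).ne_one⟩
  have hcoprime : (s : Set ℕ).Pairwise (Function.onFun Nat.Coprime fun p => p) :=
    fun p hp q hq => (Nat.coprime_primes (hprime p hp) (hprime q hq)).2
  have hperiod : φ ^ k ∈ trivialMod (powSubgroup B (∏ p ∈ s, p)) := by
    refine fun b => mem_powSubgroup_prod hcoprime fun p hp => ?_
    obtain ⟨d, rfl⟩ := hdvd p hp
    rw [pow_mul]
    exact pow_mem (pow_sub_one_mem_trivialMod φ (hprime p hp) (hindex p hp)) d b
  have hcount : ∏ p ∈ s, p ≤ k * M := by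
    refine le_of_eq_of_le ?_ (hM k hk _ hperiod).2
    rw [index_powSubgroup_prod fun p hp => (hprime p hp).ne_zero, Finset.prod_congr rfl hindex]
  refine Nat.le_of_mul_le_mul_left (?_ : k * 2 ^ s.card ≤ k * (2 * M)) hk
  calc k * 2 ^ s.card ≤ 2 * ∏ p ∈ s, p := hle
    _ ≤ 2 * (k * M) := Nat.mul_le_mul_left 2 hcount
    _ = k * (2 * M) := by ring

theorem finite_setOf_powSubgroup_ne_top (h : OrbitCovered φ) {M : ℕ}
    (hM : LinearCoinvariants φ M) : {p : ℕ | p.Prime ∧ powSubgroup B p ≠ ⊤}.Finite := by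
  by_contra hinf
  obtain ⟨s, hs, hcard⟩ :=
    (Set.Infinite.sdiff hinf (Set.finite_singleton 2)).exists_subset_card_eq (2 * M)
  have hle := two_pow_card_le_of_powSubgroup_ne_top h hM fun p hp => hs hp
  exact (hcard ▸ hle).not_gt Nat.lt_two_pow_self

end TorsionFree

end Powers

/-! ### Eigenvectors -/

section Eigenvectors

variable {B : Type*} [CommGroup B] {φ : MulAut B}

lemma exists_rel_self_of_finite {α : Type*} [Finite α] [Nonempty α] {r : α → α → Prop}
    (htrans : ∀ a b c, r a b → r b c → r a c) (hserial : ∀ a, ∃ b, r a b) : ∃ a, r a a := by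
  by_contra! hirrefl
  have : IsTrans α (flip r) := ⟨fun a b c hab hbc => htrans c b a hbc hab⟩
  have : Std.Irrefl (flip r) := ⟨hirrefl⟩
  obtain ⟨a, -, ha⟩ :=
    (Finite.wellFounded_of_trans_of_irrefl (flip r)).has_min Set.univ Set.univ_nonempty
  obtain ⟨b, hb⟩ := hserial a
  exact ha b (Set.mem_univ b) hb

lemma zpow_mul_apply_of_apply_eq_zpow {c : B} {k m : ℤ} (h : (φ ^ k) c = c ^ m) (j : ℕ) :
    (φ ^ (k * j)) c = c ^ m ^ j := by
  induction j with
  | zero => simp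
  | succ j ih =>
    rw [Nat.cast_succ, mul_add_one, zpow_add, MulAut.mul_apply, h, map_zpow, ih, ← zpow_mul,
      pow_succ]

/-- Every `c` is a `p`-th power of some `x`, and a power of `φ` moves `x` to a power of another
element `d` of `C`. Following `c ↦ d` one eventually returns to a previous element. -/
lemma exists_eigenvector_of_powSubgroup_eq_top [Nontrivial B] {C : Finset B}
    (hC : ∀ b, ∃ c ∈ C, ∃ n m : ℤ, (φ ^ n) b = c ^ m) {p : ℕ} (hp : powSubgroup B p = ⊤) :
    ∃ c ∈ C, c ≠ 1 ∧ ∃ k m : ℤ, (φ ^ k) c = c ^ m ∧ (p : ℤ) ∣ m := by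
  have hne {b c : B} {n m : ℤ} (hb : b ≠ 1) (h : (φ ^ n) b = c ^ m) : c ≠ 1 := by
    rintro rfl
    rw [one_zpow] at h
    exact hb ((map_eq_one_iff _ (φ ^ n).injective).1 h)
  obtain ⟨b, hb⟩ := exists_ne (1 : B)
  obtain ⟨c, hc, n, m, h⟩ := hC b
  have : Nonempty {c // c ∈ C ∧ c ≠ 1} := ⟨c, hc, hne hb h⟩
  have : Finite {c // c ∈ C ∧ c ≠ 1} := (C.finite_toSet.sep fun c => c ≠ 1).to_subtype
  obtain ⟨⟨c, hc, hc1⟩, hcc⟩ := exists_rel_self_of_finite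
    (r := fun c d : {c // c ∈ C ∧ c ≠ 1} => ∃ k m : ℤ, (φ ^ k) (c : B) = (d : B) ^ m ∧ (p : ℤ) ∣ m)
    (by
      rintro c d e ⟨k, m, hcd, hpm⟩ ⟨l, n, hde, -⟩
      refine ⟨l + k, n * m, ?_, hpm.mul_left n⟩
      rw [zpow_add, MulAut.mul_apply, hcd, map_zpow, hde, zpow_mul])
    (by
      rintro ⟨c, -, hc1⟩
      obtain ⟨x, hx⟩ : c ∈ powSubgroup B p := hp ▸ Subgroup.mem_top c
      obtain ⟨d, hd, k, m, hxd⟩ := hC x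
      have hcd : (φ ^ k) c = d ^ (m * p) := by
        rw [← hx, powMonoidHom_apply, map_pow, hxd, zpow_mul, zpow_natCast]
      exact ⟨⟨d, hd, hne hc1 hcd⟩, k, _, hcd, Dvd.intro_left m rfl⟩)
  exact ⟨c, hc, hc1, hcc⟩

section TorsionFree

variable [IsMulTorsionFree B]

lemma OrbitCovered.exists_cyclic_cover (h : OrbitCovered φ) :
    ∃ C : Finset B, ∀ b, ∃ c ∈ C, ∃ n m : ℤ, (φ ^ n) b = c ^ m := by
  classical
  obtain ⟨𝒱, hV, hc⟩ := h
  have hgen : ∀ V ∈ 𝒱, ∃ c : B, Subgroup.zpowers c = V := fun V hVm =>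
    V.isCyclic_iff_exists_zpowers_eq_top.1 (hV V hVm).isCyclic
  choose! c hcV using hgen
  refine ⟨𝒱.image c, fun b => ?_⟩
  obtain ⟨V, hVm, n, hn⟩ := hc b
  rw [← hcV V hVm] at hn
  obtain ⟨m, hm⟩ := hn
  exact ⟨c V, Finset.mem_image_of_mem c hVm, n, m, hm.symm⟩

/-- Both sides describe the action of `φ ^ (k * k')`, up to signs. -/
lemma eigenvalue_pow_eq_or_mul_eq_one {c : B} (hc : c ≠ 1) {k k' m m' : ℤ}
    (h : (φ ^ k) c = c ^ m) (h' : (φ ^ k') c = c ^ m') :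
    m ^ k'.natAbs = m' ^ k.natAbs ∨ m ^ k'.natAbs * m' ^ k.natAbs = 1 := by
  have hinj : Function.Injective fun n : ℤ => c ^ n :=
    injective_zpow_iff_not_isOfFinOrder.2 (not_isOfFinOrder_of_isMulTorsionFree hc)
  have hm := zpow_mul_apply_of_apply_eq_zpow h k'.natAbs
  have hm' := zpow_mul_apply_of_apply_eq_zpow h' k.natAbs
  have habs : |k * k'.natAbs| = |k' * k.natAbs| := by
    rw [abs_mul, abs_mul, Nat.abs_cast, Nat.abs_cast, Int.natCast_natAbs, Int.natCast_natAbs,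
      mul_comm]
  rcases abs_eq_abs.1 habs with heq | heq
  · rw [heq, hm'] at hm
    exact Or.inl (hinj hm).symm
  · refine Or.inr (hinj ?_)
    change c ^ _ = c ^ (1 : ℤ)
    rw [mul_comm, zpow_mul, ← hm', ← map_zpow, ← hm, ← MulAut.mul_apply, ← zpow_add, heq,
      add_neg_cancel, zpow_zero, MulAut.one_apply, zpow_one]

lemma isUnit_of_zpow_zero_apply_eq {c : B} (hc : c ≠ 1) {m : ℤ} (h : (φ ^ (0 : ℤ)) c = c ^ m) :
    IsUnit m := by
  have hinj := injective_zpow_iff_not_isOfFinOrder.2 (not_isOfFinOrder_of_isMulTorsionFree hc)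
  have h1 : (1 : ℤ) = m := hinj (by simpa using h)
  exact h1 ▸ isUnit_one

lemma prime_dvd_eigenvalue {c : B} (hc : c ≠ 1) {k k' m m' q : ℤ} (h : (φ ^ k) c = c ^ m)
    (h' : (φ ^ k') c = c ^ m') (hm : ¬ IsUnit m) (hq : Prime q) (hqm' : q ∣ m') : q ∣ m := by
  have hk : k ≠ 0 := by
    rintro rfl
    exact hm (isUnit_of_zpow_zero_apply_eq hc h)
  have hk' : k' ≠ 0 := by
    rintro rfl
    exact hq.not_isUnit (isUnit_of_dvd_unit hqm' (isUnit_of_zpow_zero_apply_eq hc h'))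
  rcases eigenvalue_pow_eq_or_mul_eq_one hc h h' with heq | hone
  · exact hq.dvd_of_dvd_pow (heq ▸ dvd_pow hqm' (Int.natAbs_ne_zero.2 hk))
  · exact absurd ((isUnit_pow_iff (Int.natAbs_ne_zero.2 hk')).1 (IsUnit.of_mul_eq_one _ hone)) hm

lemma finite_setOf_prime_dvd_eigenvalue {c : B} (hc : c ≠ 1) :
    {p : ℕ | p.Prime ∧ ∃ k m : ℤ, (φ ^ k) c = c ^ m ∧ (p : ℤ) ∣ m}.Finite := by
  refine Set.not_infinite.1 fun hinf => ?_
  obtain ⟨p, hp, k, m, hkm, hpm⟩ := hinf.nonempty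
  have hm0 : m ≠ 0 := by
    rintro rfl
    rw [zpow_zero] at hkm
    exact hc ((map_eq_one_iff _ (φ ^ k).injective).1 hkm)
  have hm : ¬ IsUnit m := fun hu =>
    (Nat.prime_iff_prime_int.1 hp).not_isUnit (isUnit_of_dvd_unit hpm hu)
  refine hinf ((Set.finite_Iic m.natAbs).subset ?_)
  rintro q ⟨hq, k', m', hkm', hqm'⟩
  have hqm := prime_dvd_eigenvalue hc hkm hkm' hm (Nat.prime_iff_prime_int.1 hq) hqm'
  exact Nat.le_of_dvd (Int.natAbs_pos.2 hm0) (Int.natCast_dvd.1 hqm)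

/-- Almost every prime `p` satisfies `B ^ p = B` and hence divides an eigenvalue. -/
theorem subsingleton_of_linearCoinvariants (h : OrbitCovered φ) {M : ℕ}
    (hM : LinearCoinvariants φ M) : Subsingleton B := by
  by_contra hB
  have := not_subsingleton_iff_nontrivial.1 hB
  obtain ⟨C, hC⟩ := h.exists_cyclic_cover
  have hfin : (⋃ c ∈ {c ∈ (C : Set B) | c ≠ 1},
      {p : ℕ | p.Prime ∧ ∃ k m : ℤ, (φ ^ k) c = c ^ m ∧ (p : ℤ) ∣ m}).Finite :=
    (C.finite_toSet.sep _).biUnion fun c hc => finite_setOf_prime_dvd_eigenvalue hc.2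
  refine Nat.infinite_setOfPred_prime
    (((finite_setOf_powSubgroup_ne_top h hM).union hfin).subset fun p hp => ?_)
  by_cases htop : powSubgroup B p = ⊤
  · obtain ⟨c, hc, hc1, hdvd⟩ := exists_eigenvector_of_powSubgroup_eq_top hC htop
    exact Or.inr (Set.mem_biUnion (⟨hc, hc1⟩ : c ∈ {c ∈ (C : Set B) | c ≠ 1}) ⟨hp, hdvd⟩)
  · exact Or.inl ⟨hp, htop⟩

end TorsionFree

theorem finite_of_linearCoinvariants (h : OrbitCovered φ) {M : ℕ}
    (hM : LinearCoinvariants φ M) : Finite B := by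
  have := subsingleton_of_linearCoinvariants (h.quotient (CommGroup.torsion B))
    (hM.quotient (CommGroup.torsion B))
  refine h.finite_of_isMulTorsion (CommGroup.torsion_eq_top_iff.1 ?_)
  exact QuotientGroup.subsingleton_iff.1 this

end Eigenvectors

/-! ### Extensions of `ℤ` -/

section Extension

/-- The elements `φ ^ j x` with `0 ≤ j < k` and `x ∈ X` represent all cosets of `S`. -/
lemma index_ne_zero_and_le_of_twisted_conj_mem {B : Type*} [CommGroup B] {φ : MulAut B} {k : ℕ}
    (hk : 0 < k) {S : Subgroup B} (hS : φ ^ k ∈ trivialMod S) {X : Set B} (hX : X.Finite)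
    (h : ∀ a, ∃ (n : ℤ) (b : B), (φ ^ n) (a * (b / (φ ^ k) b)) ∈ X) :
    S.index ≠ 0 ∧ S.index ≤ k * X.ncard := by
  have := hX.to_subtype
  let f : Fin k × X → B ⧸ S := fun v => ((φ ^ (v.1 : ℕ)) (v.2 : B) : B)
  have hf : Function.Surjective f := by
    refine QuotientGroup.mk_surjective.forall.2 fun a => ?_
    obtain ⟨n, b, hx⟩ := h a
    have hk0 : (0 : ℤ) < k := by exact_mod_cast hk
    have hj0 := Int.emod_nonneg (-n) hk0.ne'
    have hjk := Int.emod_lt_of_pos (-n) hk0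
    refine ⟨(⟨(-n % k).toNat, by omega⟩, ⟨_, hx⟩), ?_⟩
    have hφ : φ ^ (-n % k).toNat = (φ ^ k) ^ (-(-n / k)) * φ ^ (-n) := by
      rw [← zpow_natCast, Int.toNat_of_nonneg hj0, ← zpow_natCast φ k, ← zpow_mul, ← zpow_add]
      congr 1
      linarith [Int.emod_add_mul_ediv (-n) k]
    have hmove : (φ ^ (-n % k).toNat) ((φ ^ n) (a * (b / (φ ^ k) b))) =
        ((φ ^ k) ^ (-(-n / k))) (a * (b / (φ ^ k) b)) := by
      rw [hφ, MulAut.mul_apply, zpow_neg φ, MulAut.inv_apply_self]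
    refine QuotientGroup.eq_iff_div_mem.2 ?_
    change (φ ^ (-n % k).toNat) ((φ ^ n) (a * (b / (φ ^ k) b))) / a ∈ S
    rw [hmove, ← div_mul_div_cancel _ (a * (b / (φ ^ k) b)), mul_div_cancel_left]
    refine S.mul_mem ((trivialMod S).zpow_mem hS _ _) ?_
    simpa only [inv_div] using S.inv_mem (hS b)
  have hcard := Nat.card_le_card_of_surjective f hf
  rw [Nat.card_prod, Nat.card_fin] at hcard
  have : Finite (B ⧸ S) := Finite.of_surjective f hf
  exact ⟨Subgroup.finiteIndex_of_finite_quotient.index_ne_zero, hcard⟩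

variable {G : Type*} [Group G]

/-- The coset `ker f * t` meets `V` in a coset of the finite group `V ∩ ker f`. -/
lemma VirtuallyCyclic.finite_and_ncard_setOf_mul_mem_le {K : Type*} [Group K] {V : Subgroup G}
    (hV : VirtuallyCyclic V) (f : G →* K) {t : G} (ht : ¬ IsOfFinOrder (f t)) :
    {a : f.ker | (a : G) * t ∈ V}.Finite ∧
      {a : f.ker | (a : G) * t ∈ V}.ncard ≤ Nat.card (V.subgroupOf f.ker) := by
  rcases {a : f.ker | (a : G) * t ∈ V}.eq_empty_or_nonempty with hempty | ⟨a₀, ha₀⟩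
  · simp [hempty]
  have hfin : Finite (f.comp V.subtype).ker := by
    refine hV.finite_ker _ (w := ⟨_, ha₀⟩) ?_
    rwa [MonoidHom.comp_apply, Subgroup.subtype_apply, map_mul, a₀.2, one_mul]
  have : Finite (V.subgroupOf f.ker) :=
    Finite.of_injective (fun x => (⟨⟨(x : f.ker), x.2⟩, x.1.2⟩ : (f.comp V.subtype).ker))
      fun x y hxy => Subtype.ext (Subtype.ext
        (congrArg (fun z : (f.comp V.subtype).ker => ((z : V) : G)) hxy))
  have hmaps : Set.MapsTo (· * a₀⁻¹) {a : f.ker | (a : G) * t ∈ V} (V.subgroupOf f.ker) := by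
    intro a ha
    have := V.mul_mem ha (V.inv_mem ha₀)
    change (a : G) * (a₀ : G)⁻¹ ∈ V
    convert this using 1
    group
  have hinj : Set.InjOn (· * a₀⁻¹) {a : f.ker | (a : G) * t ∈ V} :=
    (mul_left_injective a₀⁻¹).injOn
  exact ⟨Set.Finite.of_injOn hmaps hinj (Set.toFinite _),
    Set.ncard_le_ncard_of_injOn _ hmaps hinj (Set.toFinite _)⟩

variable {π : G →* Multiplicative ℤ} {τ : G}

lemma exists_eq_zpow_mul (hτ : π τ = Multiplicative.ofAdd 1) (x : G) :
    ∃ (n : ℤ) (b : π.ker), x = τ ^ n * b := by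
  refine ⟨(π x).toAdd, ⟨(τ ^ (π x).toAdd)⁻¹ * x, ?_⟩, (mul_inv_cancel_left _ x).symm⟩
  rw [MonoidHom.mem_ker, map_mul, map_inv, map_zpow, hτ, ← ofAdd_zsmul]
  simp

lemma coe_conjNormal_zpow_apply {H : Subgroup G} [H.Normal] (n : ℤ) (b : H) :
    (((MulAut.conjNormal τ ^ n : MulAut H) b : H) : G) = τ ^ n * b * (τ ^ n)⁻¹ := by
  rw [← map_zpow, MulAut.conjNormal_apply]

open scoped IsMulCommutative

variable [IsMulCommutative π.ker]

lemma bVCyc.orbitCovered_conjNormal (h : bVCyc G) (hτ : π τ = Multiplicative.ofAdd 1) :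
    OrbitCovered (MulAut.conjNormal τ : MulAut π.ker) := by
  classical
  obtain ⟨𝒱, hV, hc⟩ := h
  refine ⟨𝒱.image fun V => V.subgroupOf π.ker, ?_, ?_⟩
  · intro W hW
    obtain ⟨V, hVm, rfl⟩ := Finset.mem_image.1 hW
    exact (hV V hVm).of_injective (π.ker.subtype.subgroupComap V) fun x y hxy =>
      Subtype.ext (Subtype.ext (congrArg (fun z : V => (z : G)) hxy))
  · intro b
    obtain ⟨V, hVm, x, hx⟩ := hc b
    obtain ⟨n, a, rfl⟩ := exists_eq_zpow_mul hτ x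
    have hcomm : (a : G) * b = b * a := congrArg Subtype.val (mul_comm a b)
    refine ⟨_, Finset.mem_image_of_mem _ hVm, n, ?_⟩
    rw [Subgroup.mem_subgroupOf, coe_conjNormal_zpow_apply]
    rwa [mul_inv_rev, mul_assoc (τ ^ n), hcomm, mul_assoc, mul_assoc, mul_inv_cancel_left,
      ← mul_assoc] at hx

lemma conj_mul_pow_eq (n : ℤ) (a b : π.ker) (k : ℕ) :
    τ ^ n * b * (a * τ ^ k) * (τ ^ n * b)⁻¹ =
      ((MulAut.conjNormal τ ^ n : MulAut π.ker)
        (a * (b / (MulAut.conjNormal τ ^ k : MulAut π.ker) b)) : π.ker) * τ ^ k := by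
  have hab : a * (b / (MulAut.conjNormal τ ^ k : MulAut π.ker) b) =
      b * a * ((MulAut.conjNormal τ ^ k : MulAut π.ker) b)⁻¹ := by
    rw [mul_comm b a, mul_assoc, div_eq_mul_inv]
  rw [hab, coe_conjNormal_zpow_apply, Subgroup.coe_mul, Subgroup.coe_inv,
    ← zpow_natCast (MulAut.conjNormal τ), coe_conjNormal_zpow_apply, Subgroup.coe_mul, zpow_natCast]
  have hcomm : (τ ^ n)⁻¹ * τ ^ k = τ ^ k * (τ ^ n)⁻¹ :=
    ((Commute.refl τ).zpow_left n).inv_left.pow_right k |>.eq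
  simp only [mul_inv_rev, inv_inv, mul_assoc, hcomm, inv_mul_cancel_left]

/-- The elements `a τ ^ k` are classified up to conjugacy by the coinvariants of `φ ^ k` modulo
the residual action of `φ`, which has period `k`; here `φ` is conjugation by `τ`. -/
lemma bVCyc.exists_linearCoinvariants_conjNormal (h : bVCyc G)
    (hτ : π τ = Multiplicative.ofAdd 1) :
    ∃ M, LinearCoinvariants (MulAut.conjNormal τ : MulAut π.ker) M := by
  obtain ⟨𝒱, hV, hc⟩ := h
  refine ⟨∑ V ∈ 𝒱, Nat.card (V.subgroupOf π.ker), fun k hk S hS => ?_⟩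
  have hτk : ¬ IsOfFinOrder (π (τ ^ k)) := by
    rw [map_pow, hτ]
    refine not_isOfFinOrder_of_isMulTorsionFree fun hone => hk.ne' ?_
    simpa [← ofAdd_nsmul] using hone
  have hX V (hVm : V ∈ 𝒱) := (hV V hVm).finite_and_ncard_setOf_mul_mem_le π hτk
  let X : Set π.ker := ⋃ V ∈ 𝒱, {a : π.ker | (a : G) * τ ^ k ∈ V}
  have hXfin : X.Finite := 𝒱.finite_toSet.biUnion fun V hVm => (hX V hVm).1
  have hXcard : X.ncard ≤ ∑ V ∈ 𝒱, Nat.card (V.subgroupOf π.ker) :=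
    (Finset.set_ncard_biUnion_le 𝒱 _).trans (Finset.sum_le_sum fun V hVm => (hX V hVm).2)
  obtain ⟨hne, hle⟩ := index_ne_zero_and_le_of_twisted_conj_mem hk hS hXfin fun a => by
    obtain ⟨V, hVm, x, hx⟩ := hc (a * τ ^ k)
    obtain ⟨n, b, rfl⟩ := exists_eq_zpow_mul hτ x
    rw [conj_mul_pow_eq] at hx
    exact ⟨n, b, Set.mem_biUnion hVm hx⟩
  exact ⟨hne, hle.trans (Nat.mul_le_mul_left k hXcard)⟩

theorem bVCyc.virtuallyCyclic_of_surjective_int (h : bVCyc G) (hπ : Function.Surjective π) :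
    VirtuallyCyclic G := by
  obtain ⟨τ, hτ⟩ := hπ (Multiplicative.ofAdd 1)
  obtain ⟨M, hM⟩ := h.exists_linearCoinvariants_conjNormal hτ
  have hfin : Finite π.ker := finite_of_linearCoinvariants (h.orbitCovered_conjNormal hτ) hM
  have hsurj : Function.Surjective fun a : π.ker => ((a : G) : G ⧸ Subgroup.zpowers τ) := by
    refine QuotientGroup.mk_surjective.forall.2 fun x => ?_
    obtain ⟨n, a, hx⟩ := exists_eq_zpow_mul hτ x⁻¹
    refine ⟨a⁻¹, QuotientGroup.eq.2 ⟨-n, ?_⟩⟩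
    rw [← inv_inv x, hx]
    simp
  have : Finite (G ⧸ Subgroup.zpowers τ) := Finite.of_surjective _ hsurj
  exact ⟨Subgroup.zpowers τ, inferInstance, Subgroup.finiteIndex_of_finite_quotient⟩

end Extension

/-! ### Solvable groups -/

section Solvable

variable {G : Type*} [Group G]

lemma bVCyc.virtuallyCyclic_of_surjective_of_isCyclic (h : bVCyc G) {C : Type*} [Group C]
    [IsCyclic C] (f : G →* C) [IsMulCommutative f.ker] (hf : Function.Surjective f) :
    VirtuallyCyclic G := by
  rcases finite_or_infinite C with hfin | hinf
  · exact (h.of_finiteIndex f.ker).virtuallyCyclic_of_isMulCommutative.of_finiteIndex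
  · let e : C ≃* Multiplicative ℤ := intCyclicMulEquiv.symm
    let π : G →* Multiplicative ℤ := (e : C →* Multiplicative ℤ).comp f
    have : IsMulCommutative π.ker := by rwa [MonoidHom.ker_mulEquiv_comp]
    exact h.virtuallyCyclic_of_surjective_int (π := π) (e.surjective.comp hf)

lemma bVCyc.virtuallyCyclic_of_quotient (h : bVCyc G) (A : Subgroup G) [A.Normal]
    [IsMulCommutative A] (hA : VirtuallyCyclic (G ⧸ A)) : VirtuallyCyclic G := by
  obtain ⟨C, hC, hfin⟩ := hA
  let p := QuotientGroup.mk' A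
  have : (C.comap p).FiniteIndex := finiteIndex_comap p C
  have : IsMulCommutative (p.subgroupComap C).ker := by
    have hmem (z : (p.subgroupComap C).ker) : ((z : C.comap p) : G) ∈ A :=
      (QuotientGroup.eq_one_iff _).1 (congrArg Subtype.val z.2)
    refine ⟨⟨fun x y => Subtype.ext (Subtype.ext ?_)⟩⟩
    exact setLike_mul_comm (hmem x) (hmem y)
  exact ((h.of_finiteIndex (C.comap p)).virtuallyCyclic_of_surjective_of_isCyclic
    (p.subgroupComap C) (p.subgroupComap_surjective_of_surjective C
      (QuotientGroup.mk'_surjective A))).of_finiteIndex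

/-- Induction on the derived length, splitting off the last nontrivial term of the series. -/
lemma bVCyc.virtuallyCyclic_of_derivedSeries_eq_bot {n : ℕ} (h : bVCyc G)
    (hn : derivedSeries G n = ⊥) : VirtuallyCyclic G := by
  induction n generalizing G with
  | zero =>
    have : Subsingleton G := Subgroup.subsingleton_iff.1 (subsingleton_of_top_le_bot hn.le)
    have : IsMulCommutative G := ⟨⟨fun x y => Subsingleton.elim _ _⟩⟩
    exact h.virtuallyCyclic_of_isMulCommutative
  | succ n ih =>
    have hmk := QuotientGroup.mk'_surjective (derivedSeries G n)
    have : IsMulCommutative (derivedSeries G n) :=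
      Subgroup.commutator_self_eq_bot_iff.1 hn
    refine h.virtuallyCyclic_of_quotient (derivedSeries G n) (ih (h.of_surjective _ hmk) ?_)
    rw [← map_derivedSeries_eq hmk, Subgroup.map_eq_bot_iff, QuotientGroup.ker_mk']

end Solvable

theorem stmt_2_general {G : Type*} [Group G]
    (hsolv : ∃ H : Subgroup G, Group.IsSolvable H ∧ H.FiniteIndex) (h : bVCyc G) :
    VirtuallyCyclic G := by
  obtain ⟨H, ⟨n, hn⟩, hfin⟩ := hsolv
  exact ((h.of_finiteIndex H).virtuallyCyclic_of_derivedSeries_eq_bot hn).of_finiteIndex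

/-- A finitely generated virtually solvable group with bVCyc is virtually cyclic. -/
theorem stmt_2 {G : Type*} [Group G] (hfg : Group.FG G)
    (hsolv : ∃ H : Subgroup G, IsSolvable H ∧ H.FiniteIndex)
    (h : bVCyc G) : VirtuallyCyclic G :=
  stmt_2_general hsolv h
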